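/- arXiv:1109.2824 — 2 statements merged into one kernel-verified Lean document; each statement's English description precedes it below -/
import Mathlib

section
/- Let φ : Γ₁ → Γ₂ be a finite flat morphism between graphs and let R' be a cycle in Γ₂. Then there exist a cycle R in Γ₁ and an integer d ≥ 1 such that the closed walk φ(R) (obtained by applying φ_E to the edges of R) coincides, up to cyclic rotation, with the closed walk obtained by traversing R' d consecutive times. -/
/-- A graph: a finite directed multigraph with a fixed-point-free orientation-reversing
involution `bar` on the set of oriented edges. -/
structure InvGraph where
  V : Type
  E : Type
  [fintV : Fintype V]
  [fintE : Fintype E]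
  [decV : DecidableEq V]
  [decE : DecidableEq E]
  s : E → V
  t : E → V
  bar : E → E
  bar_ne : ∀ e, bar e ≠ e
  bar_bar : ∀ e, bar (bar e) = e
  s_bar : ∀ e, s (bar e) = t e
  t_bar : ∀ e, t (bar e) = s e

attribute [instance] InvGraph.fintV InvGraph.fintE InvGraph.decV InvGraph.decE

/-- `V(Γ,F)`: the `F`-vector space with basis the vertices of `Γ`. -/
abbrev InvGraph.VVec (Γ : InvGraph) (F : Type) [Field F] : Type := Γ.V → F

/-- The subspace of relations `ē = -e`, i.e. spanned by the elements `e + ē`. -/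
def InvGraph.rel (Γ : InvGraph) (F : Type) [Field F] : Submodule F (Γ.E → F) :=
  Submodule.span F {x | ∃ e : Γ.E, x = Pi.single e 1 + Pi.single (Γ.bar e) 1}

/-- `E(Γ,F)`: the quotient of the `F`-vector space with basis the oriented edges of `Γ`
by the relations `ē = -e`. -/
abbrev InvGraph.EVec (Γ : InvGraph) (F : Type) [Field F] : Type := (Γ.E → F) ⧸ Γ.rel F

/-- The class of an oriented edge `e` in `E(Γ,F)`. -/
def InvGraph.edgeCls (Γ : InvGraph) (F : Type) [Field F] (e : Γ.E) : Γ.EVec F :=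
  Submodule.Quotient.mk (Pi.single e 1)

/-- The boundary map on the free module: `e ↦ t(e) - s(e)`. -/
def InvGraph.d0 (Γ : InvGraph) (F : Type) [Field F] : (Γ.E → F) →ₗ[F] Γ.VVec F :=
  ∑ e : Γ.E, (LinearMap.proj e : (Γ.E → F) →ₗ[F] F).smulRight
    (Pi.single (Γ.t e) 1 - Pi.single (Γ.s e) 1)

lemma InvGraph.d0_single (Γ : InvGraph) (F : Type) [Field F] (e : Γ.E) :
    Γ.d0 F (Pi.single e 1) = Pi.single (Γ.t e) 1 - Pi.single (Γ.s e) 1 := by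
  classical
  simp only [InvGraph.d0, LinearMap.sum_apply, LinearMap.smulRight_apply, LinearMap.proj_apply]
  rw [Finset.sum_eq_single e]
  · simp
  · intro b _ hb
    rw [Pi.single_eq_of_ne hb, zero_smul]
  · simp

/-- The map `d : E(Γ,F) → V(Γ,F)`, `e ↦ t(e) - s(e)`. -/
def InvGraph.dMap (Γ : InvGraph) (F : Type) [Field F] : Γ.EVec F →ₗ[F] Γ.VVec F :=
  Submodule.liftQ (Γ.rel F) (Γ.d0 F) (by
    rw [InvGraph.rel, Submodule.span_le]
    rintro x ⟨e, rfl⟩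
    simp only [SetLike.mem_coe, LinearMap.mem_ker, map_add, InvGraph.d0_single,
      Γ.s_bar, Γ.t_bar]
    abel)

lemma InvGraph.dMap_edgeCls (Γ : InvGraph) (F : Type) [Field F] (e : Γ.E) :
    Γ.dMap F (Γ.edgeCls F e) = Pi.single (Γ.t e) 1 - Pi.single (Γ.s e) 1 := by
  simpa [InvGraph.dMap, InvGraph.edgeCls] using Γ.d0_single F e

/-- The map `δ : V(Γ,F) → E(Γ,F)`, `v ↦ ∑_{e : t(e) = v} e`
(the class of the function `e ↦ g (t e)` for `g ∈ V(Γ,F)`). -/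
def InvGraph.deltaMap (Γ : InvGraph) (F : Type) [Field F] : Γ.VVec F →ₗ[F] Γ.EVec F :=
  (Γ.rel F).mkQ ∘ₗ LinearMap.funLeft F F Γ.t

lemma InvGraph.deltaMap_single (Γ : InvGraph) (F : Type) [Field F] (v : Γ.V) :
    Γ.deltaMap F (Pi.single v 1) =
      ∑ e ∈ Finset.univ.filter (fun e => Γ.t e = v), Γ.edgeCls F e := by
  classical
  simp only [InvGraph.deltaMap, LinearMap.coe_comp, Function.comp_apply, InvGraph.edgeCls,
    ← Submodule.mkQ_apply]
  rw [← map_sum]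
  congr 1
  funext e
  rw [Finset.sum_apply, Finset.sum_filter]
  simp only [LinearMap.funLeft_apply]
  have key : ∀ e' : Γ.E, (if Γ.t e' = v then ((Pi.single e' (1:F) : Γ.E → F) e) else 0)
      = (if e' = e then (if Γ.t e = v then (1:F) else 0) else 0) := by
    intro e'
    by_cases h1 : e' = e <;> by_cases h2 : Γ.t e' = v <;> simp_all [Pi.single_apply]
  rw [Finset.sum_congr rfl (fun e' _ => key e'),
    Finset.sum_ite_eq' Finset.univ e (fun _ => if Γ.t e = v then (1:F) else 0)]
  simp [Pi.single_apply]
/-- A cycle in a graph `Γ`: a nonempty closed walk, encoded as a cyclically indexed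
sequence of oriented edges `seq : ZMod len → Γ.E` with `t (seq i) = s (seq (i+1))`. -/
structure GraphCycle (Γ : InvGraph) where
  len : ℕ
  len_pos : 0 < len
  seq : ZMod len → Γ.E
  closed : ∀ i, Γ.t (seq i) = Γ.s (seq (i + 1))

/-- The class `e₁ + ⋯ + e_m ∈ E(Γ,F)` of a cycle. -/
def GraphCycle.cls {Γ : InvGraph} (R : GraphCycle Γ) (F : Type) [Field F] : Γ.EVec F :=
  haveI : NeZero R.len := ⟨R.len_pos.ne'⟩
  ∑ i : ZMod R.len, Γ.edgeCls F (R.seq i)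

/-- The multiplicity `m_R(e)`: the number of times the cycle `R` traverses the
oriented edge `e`. -/
def GraphCycle.mult {Γ : InvGraph} (R : GraphCycle Γ) (e : Γ.E) : ℕ :=
  haveI : NeZero R.len := ⟨R.len_pos.ne'⟩
  (Finset.univ.filter (fun i : ZMod R.len => R.seq i = e)).card

/-- The set of oriented edges traversed by a cycle. -/
def GraphCycle.edgeSet {Γ : InvGraph} (R : GraphCycle Γ) : Set Γ.E :=
  {e | ∃ i, R.seq i = e}

/-- The set of vertices visited by a cycle. -/
def GraphCycle.vertexSet {Γ : InvGraph} (R : GraphCycle Γ) : Set Γ.V :=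
  {v | ∃ i, Γ.s (R.seq i) = v}

/-- The cycle obtained by traversing `R` `d` consecutive times. -/
def GraphCycle.pow {Γ : InvGraph} (R : GraphCycle Γ) (d : ℕ) (hd : 0 < d) : GraphCycle Γ where
  len := d * R.len
  len_pos := Nat.mul_pos hd R.len_pos
  seq := fun i => R.seq (ZMod.castHom (dvd_mul_left R.len d) (ZMod R.len) i)
  closed := fun i => by rw [map_add, map_one]; exact R.closed _

/-- Two cycles coincide up to cyclic rotation. -/
def CyclicRotation {Γ : InvGraph} (C D : GraphCycle Γ) : Prop :=
  C.len = D.len ∧ ∃ k : ℕ, ∀ j : ℕ, C.seq (j : ZMod C.len) = D.seq ((j + k : ℕ) : ZMod D.len)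

/-- A finite flat morphism of degree `n` between graphs. -/
structure FFMor (Γ₁ Γ₂ : InvGraph) (n : ℕ) where
  vMap : Γ₁.V → Γ₂.V
  eMap : Γ₁.E → Γ₂.E
  vMap_surj : Function.Surjective vMap
  eMap_surj : Function.Surjective eMap
  s_comm : ∀ e, vMap (Γ₁.s e) = Γ₂.s (eMap e)
  t_comm : ∀ e, vMap (Γ₁.t e) = Γ₂.t (eMap e)
  bar_comm : ∀ e, eMap (Γ₁.bar e) = Γ₂.bar (eMap e)
  vMult : Γ₁.V → ℕ
  eMult : Γ₁.E → ℕ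
  vMult_pos : ∀ v, 0 < vMult v
  eMult_pos : ∀ e, 0 < eMult e
  eMult_bar : ∀ e, eMult (Γ₁.bar e) = eMult e
  fiber_s_surj : ∀ e' : Γ₂.E, ∀ v : Γ₁.V, vMap v = Γ₂.s e' →
    ∃ e : Γ₁.E, eMap e = e' ∧ Γ₁.s e = v
  sum_fiber : ∀ e' : Γ₂.E,
    ∑ e ∈ Finset.univ.filter (fun e => eMap e = e'), eMult e = n
  sum_fiber_source : ∀ e' : Γ₂.E, ∀ v : Γ₁.V, vMap v = Γ₂.s e' →
    ∑ e ∈ Finset.univ.filter (fun e => eMap e = e' ∧ Γ₁.s e = v), eMult e = vMult v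

/-- The image closed walk `φ(R)` of a cycle `R` under a finite flat morphism `φ`. -/
def FFMor.mapCycle {Γ₁ Γ₂ : InvGraph} {n : ℕ} (φ : FFMor Γ₁ Γ₂ n) (R : GraphCycle Γ₁) :
    GraphCycle Γ₂ where
  len := R.len
  len_pos := R.len_pos
  seq := fun i => φ.eMap (R.seq i)
  closed := fun i => by rw [← φ.t_comm, R.closed, φ.s_comm]

/-!
A lifted edge of `R'` is an edge `e` of `Γ₁` together with an index `i` such that `φ(e) = R'ᵢ`.
Every lifted edge has a successor: a lift of the next edge of `R'` that starts where `e` ends.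
There are finitely many lifted edges, so the successor map has a periodic point, whose orbit is a
cycle in `Γ₁`. The successor map raises the index by one, so the period is a multiple `d` of the
length of `R'`, and the orbit maps to `d` turns around `R'`, starting at the index of the
periodic point.
-/

open Function

lemma periodicPts_nonempty {α : Type*} [Finite α] [Nonempty α] (f : α → α) :
    (periodicPts f).Nonempty := by
  obtain ⟨x⟩ := ‹Nonempty α›
  obtain ⟨a, b, hab, heq⟩ := Set.finite_univ.exists_lt_map_eq_of_forall_mem
    (f := fun j : ℕ => f^[j] x) fun _ => Set.mem_univ _
  refine ⟨f^[a] x, mk_mem_periodicPts (Nat.sub_pos_of_lt hab) ?_⟩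
  rw [IsPeriodicPt, IsFixedPt, ← iterate_add_apply, Nat.sub_add_cancel hab.le]
  exact heq.symm

lemma natCast_eq_zero_of_isPeriodicPt_add_one {M : Type*} [AddMonoidWithOne M]
    [IsLeftCancelAdd M] {l : ℕ} {a : M} (h : IsPeriodicPt (· + 1) l a) : (l : M) = 0 := by
  have h' : a + l = a := by simpa [IsPeriodicPt, IsFixedPt, add_right_iterate] using h
  exact add_eq_left.mp h'

namespace GraphCycle

section OfPeriodicPt

variable {Γ : InvGraph} {α : Type*} {f : α → α} {x : α} {l : ℕ}

/-- The cycle read off a periodic orbit of a self-map `f` whose points are labelled by edges in such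
a way that the label of `f y` starts where the label of `y` ends. The period `l` need not be
minimal. -/
def ofPeriodicPt (hl : 0 < l) (hx : IsPeriodicPt f l x) (label : α → Γ.E)
    (hlabel : ∀ y, Γ.t (label y) = Γ.s (label (f y))) : GraphCycle Γ where
  len := l
  len_pos := hl
  seq i := label (f^[i.val] x)
  closed i := by
    have : NeZero l := ⟨hl.ne'⟩
    rw [hlabel, ← iterate_succ_apply' f, ZMod.val_add, ZMod.val_one_eq_one_mod, Nat.add_mod_mod,
      hx.iterate_mod_apply]

lemma ofPeriodicPt_seq_natCast (hl : 0 < l) (hx : IsPeriodicPt f l x) (label : α → Γ.E)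
    (hlabel : ∀ y, Γ.t (label y) = Γ.s (label (f y))) (j : ℕ) :
    (ofPeriodicPt hl hx label hlabel).seq (j : ZMod l) = label (f^[j] x) := by
  change label (f^[(j : ZMod l).val] x) = _
  rw [ZMod.val_natCast, hx.iterate_mod_apply]

end OfPeriodicPt

lemma pow_seq_natCast {Γ : InvGraph} (R : GraphCycle Γ) (d : ℕ) (hd : 0 < d) (j : ℕ) :
    (R.pow d hd).seq (j : ZMod (R.pow d hd).len) = R.seq j :=
  congrArg R.seq (map_natCast (ZMod.castHom (dvd_mul_left R.len d) (ZMod R.len)) j)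

instance neZero_len {Γ : InvGraph} (R : GraphCycle Γ) : NeZero R.len := ⟨R.len_pos.ne'⟩

/-- The lifted edges of a cycle `R'` along `p`: pairs of an `e : E` and a position `i` of `R'` with
`p e = R'ᵢ`. The position is recorded because `R'` may traverse the same edge several times. -/
abbrev LiftedEdge {Γ : InvGraph} (R' : GraphCycle Γ) {E : Type*} (p : E → Γ.E) : Type _ :=
  {x : E × ZMod R'.len // p x.1 = R'.seq x.2}

lemma exists_liftedEdge_succ {Γ₁ Γ₂ : InvGraph} {eMap : Γ₁.E → Γ₂.E}
    (lift : ∀ e e', Γ₂.t (eMap e) = Γ₂.s e' → ∃ f, eMap f = e' ∧ Γ₁.s f = Γ₁.t e)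
    (R' : GraphCycle Γ₂) :
    ∃ succ : R'.LiftedEdge eMap → R'.LiftedEdge eMap,
      (∀ x, Γ₁.t x.1.1 = Γ₁.s (succ x).1.1) ∧
        Semiconj (fun x : R'.LiftedEdge eMap => x.1.2) succ (· + 1) := by
  have hlift (x : R'.LiftedEdge eMap) : ∃ f, eMap f = R'.seq (x.1.2 + 1) ∧ Γ₁.s f = Γ₁.t x.1.1 :=
    lift x.1.1 _ (by rw [x.2, R'.closed])
  choose next hnext_map hnext_s using hlift
  exact ⟨fun x => ⟨(next x, x.1.2 + 1), hnext_map x⟩, fun x => (hnext_s x).symm, fun _ => rfl⟩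

end GraphCycle

lemma FFMor.exists_eMap_eq_and_s_eq_t {Γ₁ Γ₂ : InvGraph} {n : ℕ} (φ : FFMor Γ₁ Γ₂ n)
    (e : Γ₁.E) (e' : Γ₂.E) (h : Γ₂.t (φ.eMap e) = Γ₂.s e') :
    ∃ f, φ.eMap f = e' ∧ Γ₁.s f = Γ₁.t e :=
  φ.fiber_s_surj e' (Γ₁.t e) (by rw [φ.t_comm, h])

theorem statement5_general {Γ₁ Γ₂ : InvGraph} (eMap : Γ₁.E → Γ₂.E)
    (lift : ∀ e e', Γ₂.t (eMap e) = Γ₂.s e' → ∃ f, eMap f = e' ∧ Γ₁.s f = Γ₁.t e)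
    (R' : GraphCycle Γ₂) (hR' : (R'.edgeSet ∩ Set.range eMap).Nonempty) :
    ∃ (R : GraphCycle Γ₁) (d : ℕ) (hd : 0 < d), R.len = (R'.pow d hd).len ∧
      ∃ k : ℕ, ∀ j : ℕ, eMap (R.seq (j : ZMod R.len)) =
        (R'.pow d hd).seq ((j + k : ℕ) : ZMod (R'.pow d hd).len) := by
  obtain ⟨_, ⟨i, rfl⟩, e, he⟩ := hR'
  have : Nonempty (R'.LiftedEdge eMap) := ⟨⟨(e, i), he⟩⟩
  obtain ⟨succ, hsucc_s, hsucc_index⟩ := R'.exists_liftedEdge_succ lift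
  obtain ⟨x, l, hl, hx⟩ := periodicPts_nonempty succ
  have hdvd : R'.len ∣ l := (ZMod.natCast_eq_zero_iff l R'.len).mp
    (natCast_eq_zero_of_isPeriodicPt_add_one (hx.map hsucc_index))
  obtain ⟨d, rfl⟩ := exists_eq_mul_left_of_dvd hdvd
  refine ⟨.ofPeriodicPt hl hx (fun y => y.1.1) hsucc_s, d, Nat.pos_of_mul_pos_right hl, rfl,
    x.1.2.val, fun j => ?_⟩
  have hindex : (succ^[j] x).1.2 = x.1.2 + j := by
    simpa [add_right_iterate] using hsucc_index.iterate_right j x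
  calc eMap _ = eMap (succ^[j] x).1.1 :=
        congrArg eMap (GraphCycle.ofPeriodicPt_seq_natCast hl hx _ hsucc_s j)
    _ = R'.seq (x.1.2 + j) := by rw [(succ^[j] x).2, hindex]
    _ = R'.seq ((j + x.1.2.val : ℕ) : ZMod R'.len) := by
        rw [Nat.cast_add, ZMod.natCast_zmod_val, add_comm]
    _ = _ := (R'.pow_seq_natCast d _ _).symm

/-- for a finite flat morphism `φ : Γ₁ → Γ₂` and a cycle `R'` in `Γ₂`,
there exist a cycle `R` in `Γ₁` and an integer `d ≥ 1` such that `φ(R)` coincides, up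
to cyclic rotation, with `R'` traversed `d` consecutive times. -/
theorem statement5 (Γ₁ Γ₂ : InvGraph) (n : ℕ) (φ : FFMor Γ₁ Γ₂ n) (R' : GraphCycle Γ₂) :
    ∃ (R : GraphCycle Γ₁) (d : ℕ) (hd : 0 < d),
      CyclicRotation (φ.mapCycle R) (R'.pow d hd) := by
  have ⟨e, he⟩ := φ.eMap_surj (R'.seq 0)
  exact statement5_general φ.eMap φ.exists_eMap_eq_and_s_eq_t R' ⟨R'.seq 0, ⟨0, rfl⟩, e, he⟩
end

section
/- (Pullback of cycles, existence.) Let φ : Γ₁ → Γ₂ be a finite flat morphism of degree n between graphs, with multiplicities n_e (e ∈ E(Γ₁)), and let R' be a cycle in Γ₂. Then there exist cycles R₁, …, R_m in Γ₁ such that: (1) for each i, the closed walk φ(R_i) coincides, up to cyclic rotation, with the cycle R' traversed d_i consecutive times for some integer d_i ≥ 1; and (2) for every oriented edge e ∈ E(Γ₁), the total number of traversals Σ_{i=1}^m m_{R_i}(e) equals n_e · m_{R'}(φ_E(e)). (In the case where R' and all the R_i traverse each oriented edge at most once, condition (2) says exactly that for every e with φ_E(e) ∈ E(R'), the number of indices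 i with e ∈ E(R_i) equals n_e.) -/
/-! Replace every step of `R'` by its lifts, an edge `e` contributing `n_e` copies. Flatness,
applied to an edge and to its reverse, says that over each vertex of `R'` as many copies end at a
given vertex of `Γ₁` as start there. Matching them bijectively gives a permutation which sends each
copy to a composable copy over the next step of `R'`. The cycles of this permutation are closed
walks, and each covers `R'` a whole number of times because it advances along `R'` one step at a
time. -/

section CycleDecomposition

open MulAction Subgroup Function

variable {G X : Type*} [Group G] [MulAction G X] (g : G)

/-- The decomposition of a `G`-set into the cycles of `g : G`, each based at a chosen
representative. An infinite cycle has minimal period `0` and is indexed by `ZMod 0 = ℤ`. -/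
noncomputable def sigmaZModEquiv :
    (Σ q : orbitRel.Quotient (zpowers g) X, ZMod (minimalPeriod (g • ·) q.out)) ≃ X :=
  (Equiv.sigmaCongrRight fun q : orbitRel.Quotient (zpowers g) X =>
    (orbitZPowersEquiv g q.out).symm).trans
      (selfEquivSigmaOrbits (zpowers g) X).symm

lemma sigmaZModEquiv_intCast (q : orbitRel.Quotient (zpowers g) X) (k : ℤ) :
    sigmaZModEquiv g ⟨q, k⟩ = g ^ k • q.out :=
  congrArg Subtype.val (orbitZPowersEquiv_symm_apply' g q.out k)

lemma sigmaZModEquiv_add_one (q : orbitRel.Quotient (zpowers g) X)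
    (j : ZMod (minimalPeriod (g • ·) q.out)) :
    sigmaZModEquiv g ⟨q, j + 1⟩ = g • sigmaZModEquiv g ⟨q, j⟩ := by
  obtain ⟨k, rfl⟩ := ZMod.intCast_surjective j
  rw [← Int.cast_one, ← Int.cast_add, sigmaZModEquiv_intCast, sigmaZModEquiv_intCast, add_comm,
    zpow_one_add, mul_smul]

lemma exists_sigma_zmod_equiv [Finite X] :
    ∃ (m : ℕ) (p : Fin m → ℕ) (F : (Σ i, ZMod (p i)) ≃ X),
      (∀ i, 0 < p i) ∧ ∀ i j, F ⟨i, j + 1⟩ = g • F ⟨i, j⟩ := by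
  obtain ⟨m, ⟨index⟩⟩ := Finite.exists_equiv_fin (orbitRel.Quotient (zpowers g) X)
  exact ⟨m, fun i => minimalPeriod (g • ·) (index.symm i).out,
    (Equiv.sigmaCongrLeft index.symm).trans (sigmaZModEquiv g),
    fun _ => minimalPeriod_pos_of_mem_periodicPts ((MulAction.injective g).mem_periodicPts _),
    fun _ _ => sigmaZModEquiv_add_one g _ _⟩

end CycleDecomposition

lemma exists_perm_comp_eq {X Y : Type*} [Finite X] (a b : X → Y)
    (h : ∀ y, Nat.card {x // a x = y} = Nat.card {x // b x = y}) :
    ∃ σ : Equiv.Perm X, ∀ x, b (σ x) = a x := by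
  let fibre y : {x // a x = y} ≃ {x // b x = y} := (Finite.card_eq.1 (h y)).some
  exact ⟨(Equiv.sigmaFiberEquiv a).symm.trans
    ((Equiv.sigmaCongrRight fibre).trans (Equiv.sigmaFiberEquiv b)),
    fun x => (fibre (a x) ⟨x, rfl⟩).2⟩

lemma dvd_of_addConstMap {m n : ℕ} (θ : AddConstMap (ZMod m) (ZMod n) 1 1) : n ∣ m := by
  have period := AddConstMapClass.map_nat θ m
  rw [ZMod.natCast_self, left_eq_add] at period
  exact (ZMod.natCast_eq_zero_iff m n).1 period

namespace GraphCycle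

variable {Γ Γ₁ Γ₂ : InvGraph}

/-- The image of a cycle under a map of edges which sends composable edges to composable edges. -/
def map (R : GraphCycle Γ₁) (f : Γ₁.E → Γ₂.E)
    (hf : ∀ e e', Γ₁.t e = Γ₁.s e' → Γ₂.t (f e) = Γ₂.s (f e')) : GraphCycle Γ₂ where
  len := R.len
  len_pos := R.len_pos
  seq i := f (R.seq i)
  closed i := hf _ _ (R.closed i)

lemma mult_eq_natCard (R : GraphCycle Γ) (e : Γ.E) :
    R.mult e = Nat.card {i // R.seq i = e} := by
  have : NeZero R.len := ⟨R.len_pos.ne'⟩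
  rw [Nat.card_eq_fintype_card, Fintype.card_subtype, mult]

lemma sum_mult_eq_natCard {ι : Type*} [Fintype ι] (Rs : ι → GraphCycle Γ) (e : Γ.E) :
    ∑ i, (Rs i).mult e = Nat.card {x : Σ i, ZMod (Rs i).len // (Rs x.1).seq x.2 = e} := by
  have (i : ι) : NeZero (Rs i).len := ⟨(Rs i).len_pos.ne'⟩
  rw [Nat.card_eq_fintype_card, Fintype.card_subtype, Finset.card_filter, Fintype.sum_sigma]
  exact Finset.sum_congr rfl fun i _ => Finset.card_filter _ _

lemma exists_cyclicRotation_pow {C D : GraphCycle Γ}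
    (θ : AddConstMap (ZMod C.len) (ZMod D.len) 1 1) (hseq : ∀ j, C.seq j = D.seq (θ j)) :
    ∃ (d : ℕ) (hd : 0 < d), CyclicRotation C (D.pow d hd) := by
  have : NeZero D.len := ⟨D.len_pos.ne'⟩
  obtain ⟨d, hlen⟩ := dvd_of_addConstMap θ
  have hd : 0 < d := Nat.pos_of_mul_pos_left (hlen ▸ C.len_pos)
  refine ⟨d, hd, hlen.trans (mul_comm _ _), (θ 0).val, fun j => ?_⟩
  rw [hseq, AddConstMapClass.map_nat]
  refine congrArg D.seq ((map_natCast _ _).trans ?_).symm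
  rw [Nat.cast_add, ZMod.natCast_zmod_val, add_comm]

end GraphCycle

section Lifting

variable {Γ₁ Γ₂ : InvGraph} (f : Γ₁.E → Γ₂.E) (w : Γ₁.E → ℕ) (R' : GraphCycle Γ₂)

/-- Kirchhoff's law along `R'` for the edge weight `w`: at each vertex `v`, the edges over a step of
`R'` ending at `v` weigh as much as the edges over the next step starting at `v`. -/
def IsBalancedAlong : Prop :=
  ∀ i v, ∑ e with f e = R'.seq i ∧ Γ₁.t e = v, w e =
    ∑ e with f e = R'.seq (i + 1) ∧ Γ₁.s e = v, w e

/-- A lift of a step of `R'` along `f`, where each edge `e` is available in `w e` copies. -/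
structure LiftedStep where
  edge : Γ₁.E
  step : ZMod R'.len
  map_edge : f edge = R'.seq step
  copy : Fin (w edge)

namespace LiftedStep

variable {f w R'}

instance : Finite (LiftedStep f w R') := by
  have : NeZero R'.len := ⟨R'.len_pos.ne'⟩
  refine Finite.of_injective
    (fun x => (⟨x.edge, x.step, x.copy⟩ : Σ e, ZMod R'.len × Fin (w e))) ?_
  rintro ⟨e, i, _, k⟩ ⟨_, _, _, _⟩ h
  cases h
  rfl

lemma natCard_edge_eq (e : Γ₁.E) :
    Nat.card {x : LiftedStep f w R' // x.edge = e} = w e * R'.mult (f e) := by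
  let fibre : {x : LiftedStep f w R' // x.edge = e} ≃
      Fin (w e) × {i // R'.seq i = f e} :=
    { toFun := fun ⟨x, hx⟩ => ⟨hx ▸ x.copy, x.step, hx ▸ x.map_edge.symm⟩
      invFun := fun ⟨k, i⟩ => ⟨⟨e, i, i.2.symm, k⟩, rfl⟩
      left_inv := by rintro ⟨x, rfl⟩; rfl
      right_inv _ := rfl }
  rw [Nat.card_congr fibre, Nat.card_prod, Nat.card_fin, R'.mult_eq_natCard]

lemma natCard_step_eq_and (i : ZMod R'.len) (P : Γ₁.E → Prop) [DecidablePred P] :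
    Nat.card {x : LiftedStep f w R' // x.step = i ∧ P x.edge} =
      ∑ e with f e = R'.seq i ∧ P e, w e := by
  let fibre : {x : LiftedStep f w R' // x.step = i ∧ P x.edge} ≃
      Σ e : {e // f e = R'.seq i ∧ P e}, Fin (w e) :=
    { toFun := fun ⟨x, hx⟩ => ⟨⟨x.edge, hx.1 ▸ x.map_edge, hx.2⟩, x.copy⟩
      invFun := fun ⟨e, k⟩ => ⟨⟨e, i, e.2.1, k⟩, rfl, e.2.2⟩
      left_inv := by rintro ⟨x, rfl, _⟩; rfl
      right_inv _ := rfl }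
  rw [Nat.card_congr fibre, Nat.card_sigma]
  simp only [Nat.card_fin]
  exact (Finset.sum_subtype _ (by simp) w).symm

lemma exists_perm_step_add_one (hw : IsBalancedAlong f w R') :
    ∃ σ : Equiv.Perm (LiftedStep f w R'), ∀ x,
      (σ x).step = x.step + 1 ∧ Γ₁.s (σ x).edge = Γ₁.t x.edge := by
  let tail (x : LiftedStep f w R') : ZMod R'.len × Γ₁.V := (x.step, Γ₁.s x.edge)
  let head (x : LiftedStep f w R') : ZMod R'.len × Γ₁.V := (x.step + 1, Γ₁.t x.edge)
  have equinumerous (y) : Nat.card {x // head x = y} = Nat.card {x // tail x = y} := by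
    obtain ⟨i, v⟩ := y
    simp only [head, tail, Prod.mk.injEq, ← eq_sub_iff_add_eq]
    rw [natCard_step_eq_and (i - 1) (Γ₁.t · = v), natCard_step_eq_and i (Γ₁.s · = v), hw,
      sub_add_cancel]
  obtain ⟨σ, hσ⟩ := exists_perm_comp_eq head tail equinumerous
  exact ⟨σ, fun x => Prod.mk.inj (hσ x)⟩

end LiftedStep

end Lifting

namespace FFMor

variable {Γ₁ Γ₂ : InvGraph} {n : ℕ} (φ : FFMor Γ₁ Γ₂ n)

lemma sum_fiber_target (e' : Γ₂.E) (v : Γ₁.V) (hv : φ.vMap v = Γ₂.t e') :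
    ∑ e with φ.eMap e = e' ∧ Γ₁.t e = v, φ.eMult e = φ.vMult v := by
  rw [← φ.sum_fiber_source (Γ₂.bar e') v (by rw [hv, Γ₂.s_bar])]
  have bar_inj : Function.Injective Γ₂.bar := Function.Involutive.injective Γ₂.bar_bar
  exact Finset.sum_bijective Γ₁.bar (Function.Involutive.bijective Γ₁.bar_bar)
    (by simp [φ.bar_comm, Γ₁.s_bar, bar_inj.eq_iff]) (by simp [φ.eMult_bar])

lemma isBalancedAlong (R' : GraphCycle Γ₂) : IsBalancedAlong φ.eMap φ.eMult R' := by
  intro i v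
  by_cases hv : φ.vMap v = Γ₂.t (R'.seq i)
  · rw [φ.sum_fiber_target _ v hv, φ.sum_fiber_source _ v (hv.trans (R'.closed i))]
  · rw [Finset.sum_eq_zero, Finset.sum_eq_zero]
    · simp only [Finset.mem_filter]
      rintro e ⟨-, he, rfl⟩
      exact absurd (by rw [φ.s_comm, he, R'.closed]) hv
    · simp only [Finset.mem_filter]
      rintro e ⟨-, he, rfl⟩
      exact absurd (by rw [φ.t_comm, he]) hv

end FFMor

theorem statement6_general {Γ₁ Γ₂ : InvGraph} (f : Γ₁.E → Γ₂.E)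
    (hf : ∀ e e', Γ₁.t e = Γ₁.s e' → Γ₂.t (f e) = Γ₂.s (f e'))
    (w : Γ₁.E → ℕ) (R' : GraphCycle Γ₂) (hw : IsBalancedAlong f w R') :
    ∃ (m : ℕ) (Rs : Fin m → GraphCycle Γ₁),
      (∀ i, ∃ (d : ℕ) (hd : 0 < d), CyclicRotation ((Rs i).map f hf) (R'.pow d hd)) ∧
      ∀ e, ∑ i, (Rs i).mult e = w e * R'.mult (f e) := by
  obtain ⟨σ, hσ⟩ := LiftedStep.exists_perm_step_add_one hw
  obtain ⟨m, p, F, hp, hF⟩ := exists_sigma_zmod_equiv (X := LiftedStep f w R') σ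
  simp only [Equiv.Perm.smul_def] at hF
  let Rs (i : Fin m) : GraphCycle Γ₁ :=
    { len := p i
      len_pos := hp i
      seq := fun j => (F ⟨i, j⟩).edge
      closed := fun j => by rw [hF, (hσ _).2] }
  refine ⟨m, Rs, fun i => ?_, fun e => ?_⟩
  · let step : AddConstMap (ZMod (p i)) (ZMod R'.len) 1 1 :=
      ⟨fun j => (F ⟨i, j⟩).step, fun j => by rw [hF, (hσ _).1]⟩
    exact GraphCycle.exists_cyclicRotation_pow step fun j => (F ⟨i, j⟩).map_edge
  · rw [GraphCycle.sum_mult_eq_natCard, ← LiftedStep.natCard_edge_eq]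
    exact Nat.card_congr (F.subtypeEquiv fun _ => Iff.rfl)

/-- pullback of cycles, existence: for a finite flat morphism
`φ : Γ₁ → Γ₂` of degree `n` with multiplicities `n_e` and a cycle `R'` in `Γ₂`, there
are cycles `R₁, …, R_m` in `Γ₁` such that (1) each `φ(Rᵢ)` coincides up to cyclic
rotation with `R'` traversed `dᵢ ≥ 1` consecutive times, and (2) for every oriented
edge `e` of `Γ₁`, `∑ᵢ m_{Rᵢ}(e) = n_e · m_{R'}(φ_E(e))`. -/
theorem statement6 (Γ₁ Γ₂ : InvGraph) (n : ℕ) (φ : FFMor Γ₁ Γ₂ n) (R' : GraphCycle Γ₂) :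
    ∃ (m : ℕ) (Rs : Fin m → GraphCycle Γ₁),
      (∀ i : Fin m, ∃ (d : ℕ) (hd : 0 < d),
        CyclicRotation (φ.mapCycle (Rs i)) (R'.pow d hd)) ∧
      (∀ e : Γ₁.E, ∑ i : Fin m, (Rs i).mult e = φ.eMult e * R'.mult (φ.eMap e)) :=
  statement6_general φ.eMap (fun e e' h => by rw [← φ.t_comm, h, φ.s_comm]) φ.eMult R'
    (φ.isBalancedAlong R')
end
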